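/- (Deterministic backward Skorokhod problem with two continuous barriers.) Let l, u : [0,T] → ℝ be continuous with inf_{t∈[0,T]}(u_t − l_t) > 0, let ȳ : [0,T] → ℝ be continuous, and let a ∈ ℝ with l_T ≤ a ≤ u_T. Then there exists a unique pair (y, k) of continuous functions on [0,T] such that: (i) y_t = a + ȳ_T − ȳ_t + k_T − k_t and l_t ≤ y_t ≤ u_t for all t ∈ [0,T]; (ii) k_0 = 0, k is of bounded variation on [0,T], and for all 0 ≤ s < t ≤ T one has k_t ≥ k_s whenever y_v < u_v for every v ∈ (s,t], and k_t ≤ k_s whenever y_v > l_v for every v ∈ (s,t]. Moreover, for every t ∈ [0,T]: k_T − k_t = −max{ (a − u_T)⁺ ∧ inf_{t≤v≤T}(a + ȳ_T − ȳ_v − l_v), sup_{t≤s≤T}[ (a + ȳ_T − ȳ_s − u_s) ∧ inf_{t≤v≤s}(a + ȳ_T − ȳ_v − l_v) ] }. -/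

import Mathlib

open Set

/-- The minimality (Skorokhod) condition in its equivalent increment form: `k` may only
increase on intervals where `y` stays strictly below `u` and may only decrease on intervals
where `y` stays strictly above `l`. -/
def MinimalityIncr (T : ℝ) (y l u k : ℝ → ℝ) : Prop :=
  ∀ s t : ℝ, 0 ≤ s → s < t → t ≤ T →
    ((∀ v, s < v → v ≤ t → y v < u v) → k s ≤ k t) ∧
    ((∀ v, s < v → v ≤ t → l v < y v) → k t ≤ k s)

/-!
Write `x t = a + ȳ T - ȳ t` for the unreflected path and `m t = -(k T - k t)`, so that `y = x - m`.
Then `m` lives in the tube `f = x - u ≤ m ≤ g = x - l`, ends at `m T = 0` and, read backwards in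
time, moves only when it is pushed up by `f` or down by `g`.  The max-min formula satisfies a
dynamic programming identity: restarting it at an intermediate time from the value reached there
does not change it.  Hence going back from `t` to `s` raises `m` at most to `sup f` over `[s, t]`
and lowers it at most to `inf g`, which yields continuity and minimality.  Uniqueness is a
comparison argument: before two solutions meet, the larger one is off `f` and the smaller one is off
`g`, so their distance cannot shrink forward in time.  As `f < g`, the open sets `{f < m}` and
`{m < g}` cover `[0, T]`; on intervals inside one of them `m` is monotone, whence bounded variation.
-/

open Filter Topology

lemma eventually_forall_mem_uIcc_dist_lt {α E : Type*} [LinearOrder α] [TopologicalSpace α]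
    [OrderTopology α] [PseudoMetricSpace E] {φ : α → E} {S : Set α} [S.OrdConnected] {x : α}
    {ε : ℝ} (hφ : ContinuousWithinAt φ S x) (hx : x ∈ S) (hε : 0 < ε) :
    ∀ᶠ y in 𝓝[S] x, ∀ v ∈ uIcc x y, ∀ w ∈ uIcc x y, dist (φ v) (φ w) < ε := by
  have hnear : ∀ᶠ y in 𝓝[S] x, dist (φ y) (φ x) < ε / 2 :=
    Metric.tendsto_nhds.1 hφ (ε / 2) (half_pos hε)
  have huIcc : Tendsto (uIcc x) (𝓝[S] x) (𝓝[S] x).smallSets :=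
    (tendsto_const_nhdsWithin hx).uIcc tendsto_id
  filter_upwards [huIcc.eventually hnear.smallSets] with y hy v hv w hw
  exact (dist_triangle_right _ _ _).trans_lt ((add_lt_add (hy v hv) (hy w hw)).trans_eq
    (add_halves ε))

section OrderContinuity

variable {α β : Type*} [LinearOrder α] [TopologicalSpace α] [CompactIccSpace α] [LinearOrder β]
  [TopologicalSpace β] [OrderClosedTopology β] {p r : α → β} {s t : α}

lemma exists_mem_Ioc_le_forall_lt [OrderClosedTopology α] (hst : s ≤ t)
    (hp : ContinuousOn p (Icc s t)) (hr : ContinuousOn r (Icc s t)) (hs : p s < r s)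
    (ht : r t ≤ p t) :
    ∃ q ∈ Ioc s t, r q ≤ p q ∧ ∀ v ∈ Ico s q, p v < r v := by
  have hcompact : IsCompact {x ∈ Icc s t | r x ≤ p x} :=
    isCompact_Icc.of_isClosed_subset (isClosed_Icc.isClosed_le hr hp) (sep_subset _ _)
  obtain ⟨q, ⟨hq, hle⟩, hleast⟩ := hcompact.exists_isLeast ⟨t, right_mem_Icc.2 hst, ht⟩
  have hsq : s < q := hq.1.lt_of_ne (by rintro rfl; exact hs.not_ge hle)
  refine ⟨q, ⟨hsq, hq.2⟩, hle, fun v hv => ?_⟩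
  by_contra! hvle
  exact hv.2.not_ge (hleast ⟨⟨hv.1, hv.2.le.trans hq.2⟩, hvle⟩)

lemma left_le_right_of_forall_le_max [OrderTopology α] [DenselyOrdered α] (hst : s ≤ t)
    (hp : ContinuousOn p (Icc s t)) (hr : ContinuousOn r (Icc s t))
    (hmax : ∀ x ∈ Icc s t, ∀ M, (∀ v ∈ Icc x t, p v ≤ M) → r x ≤ max (r t) M)
    (hlt : ∀ v ∈ Ioc s t, p v < r v) : r s ≤ r t := by
  obtain rfl | hst := hst.eq_or_lt
  · exact le_rfl
  have hIoc : ∀ x ∈ Ioc s t, r x ≤ r t := by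
    intro x hx
    have hsub : Icc x t ⊆ Icc s t := Icc_subset_Icc_left hx.1.le
    obtain ⟨y, hy, hry⟩ :=
      isCompact_Icc.exists_isMaxOn (nonempty_Icc.2 hx.2) (hr.mono hsub)
    have hsub' : Icc y t ⊆ Icc x t := Icc_subset_Icc_left hy.1
    obtain ⟨z, hz, hpz⟩ :=
      isCompact_Icc.exists_isMaxOn (nonempty_Icc.2 hy.2) (hp.mono (hsub'.trans hsub))
    have hpr : p z < r y :=
      (hlt z ⟨hx.1.trans_le (hsub' hz).1, hz.2⟩).trans_le (hry (hsub' hz))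
    have hyt : r y ≤ r t :=
      (le_max_iff.1 (hmax y (hsub hy) (p z) fun v hv => hpz hv)).resolve_right hpr.not_ge
    exact (hry (left_mem_Icc.2 hx.2)).trans hyt
  have hclosure : closure (Ioc s t) = Icc s t := closure_Ioc hst.ne
  exact le_on_closure hIoc (hclosure ▸ hr) continuousOn_const (hclosure ▸ left_mem_Icc.2 hst.le)

end OrderContinuity

section BoundedVariation

lemma boundedVariationOn_Icc_of_isOpen_cover {E ι : Type*} [PseudoEMetricSpace E] {φ : ℝ → E}
    {a b : ℝ} (hab : a ≤ b) {U : ι → Set (Icc a b)} (hopen : ∀ i, IsOpen (U i))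
    (hcover : univ ⊆ ⋃ i, U i)
    (hφ : ∀ i, ∀ s t : Icc a b, s ≤ t → Icc s t ⊆ U i → BoundedVariationOn φ (Icc (s : ℝ) t)) :
    BoundedVariationOn φ (Icc a b) := by
  obtain ⟨τ, hτa, hτ, ⟨n, hτb⟩, hτU⟩ :=
    exists_monotone_Icc_subset_open_cover_Icc hab hopen hcover
  have hsum := eVariationOn.sum' φ (I := fun j => (τ j : ℝ)) hτ (n := n)
  rw [hτa, hτb n le_rfl] at hsum
  rw [BoundedVariationOn, ← hsum]
  refine ENNReal.sum_ne_top.2 fun j _ => ?_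
  obtain ⟨i, hi⟩ := hτU j
  exact hφ i _ _ (hτ j.le_succ) hi

lemma boundedVariationOn_Icc_of_monotoneOn {α : Type*} [LinearOrder α] {φ : α → ℝ} {s t : α}
    (hφ : MonotoneOn φ (Icc s t)) : BoundedVariationOn φ (Icc s t) := by
  obtain hst | hst := le_or_gt s t
  · simpa only [inter_self] using
      hφ.locallyBoundedVariationOn s t (left_mem_Icc.2 hst) (right_mem_Icc.2 hst)
  · exact .of_subsingleton (Icc_eq_empty hst.not_ge ▸ subsingleton_empty)

lemma boundedVariationOn_Icc_of_antitoneOn {α : Type*} [LinearOrder α] {φ : α → ℝ} {s t : α}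
    (hφ : AntitoneOn φ (Icc s t)) : BoundedVariationOn φ (Icc s t) := by
  simpa only [BoundedVariationOn, eVariationOn, edist_neg_neg] using
    boundedVariationOn_Icc_of_monotoneOn hφ.neg

lemma boundedVariationOn_sub_const_iff {α E : Type*} [LinearOrder α] [SeminormedAddCommGroup E]
    {φ : α → E} {s : Set α} (c : E) :
    BoundedVariationOn (fun t => φ t - c) s ↔ BoundedVariationOn φ s := by
  simp only [BoundedVariationOn, eVariationOn, edist_sub_right]

end BoundedVariation

section Play

variable {α : Type*} [LinearOrder α] {f g f' g' m m' : α → ℝ} {a b s t : α} {c ε M : ℝ}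

/-- A *backward play* (in the sense of hysteresis operators) in the tube between `f` and `g` over
`[a, b]`: a continuous path in the tube which, followed from `b` down to `a`, rises only while it
touches `f` and falls only while it touches `g`.  It encodes the reflecting term of a backward
Skorokhod problem.  The intervals are open on the left, as in `MinimalityIncr`. -/
structure IsBackwardPlay [TopologicalSpace α] (f g : α → ℝ) (a b : α) (m : α → ℝ) : Prop where
  continuousOn : ContinuousOn m (Icc a b)
  lower_le : ∀ t ∈ Icc a b, f t ≤ m t
  le_upper : ∀ t ∈ Icc a b, m t ≤ g t
  le_of_lower_lt : ∀ ⦃s t⦄, a ≤ s → s ≤ t → t ≤ b → (∀ v ∈ Ioc s t, f v < m v) → m s ≤ m t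
  ge_of_lt_upper : ∀ ⦃s t⦄, a ≤ s → s ≤ t → t ≤ b → (∀ v ∈ Ioc s t, m v < g v) → m t ≤ m s

namespace IsBackwardPlay

variable [TopologicalSpace α]

lemma le_of_right_le [OrderTopology α] [CompactIccSpace α] [DenselyOrdered α]
    (hm : IsBackwardPlay f g a b m) (hm' : IsBackwardPlay f' g' a b m')
    (hf : ∀ t ∈ Icc a b, f' t ≤ f t) (hg : ∀ t ∈ Icc a b, g' t ≤ g t) (hb : m' b ≤ m b) :
    ∀ t ∈ Icc a b, m' t ≤ m t := by
  intro t ht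
  by_contra! hlt
  have hsub : Icc t b ⊆ Icc a b := Icc_subset_Icc_left ht.1
  obtain ⟨q, hq, hle, hIco⟩ := exists_mem_Ioc_le_forall_lt ht.2
    (hm.continuousOn.mono hsub) (hm'.continuousOn.mono hsub) hlt hb
  have hgap : ∀ x ∈ Ico t q, m' t - m t ≤ m' x - m x := by
    intro x hx
    have hxb : x ≤ b := hx.2.le.trans hq.2
    have hmem : ∀ v ∈ Ioc t x, v ∈ Icc a b ∧ m v < m' v := fun v hv =>
      ⟨⟨ht.1.trans hv.1.le, hv.2.trans hxb⟩, hIco v ⟨hv.1.le, hv.2.trans_lt hx.2⟩⟩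
    have hfall : m x ≤ m t := hm.ge_of_lt_upper ht.1 hx.1 hxb fun v hv =>
      (hmem v hv).2.trans_le ((hm'.le_upper v (hmem v hv).1).trans (hg v (hmem v hv).1))
    have hrise : m' t ≤ m' x := hm'.le_of_lower_lt ht.1 hx.1 hxb fun v hv =>
      ((hf v (hmem v hv).1).trans (hm.lower_le v (hmem v hv).1)).trans_lt (hmem v hv).2
    exact sub_le_sub hrise hfall
  have hclosure : closure (Ico t q) = Icc t q := closure_Ico hq.1.ne
  have hcont : ContinuousOn (fun x => m' x - m x) (closure (Ico t q)) :=
    (hm'.continuousOn.sub hm.continuousOn).mono (hclosure ▸ Icc_subset_Icc ht.1 hq.2)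
  have hgapq : m' t - m t ≤ m' q - m q :=
    le_on_closure hgap continuousOn_const hcont (hclosure ▸ right_mem_Icc.2 hq.1.le)
  exact absurd (sub_nonpos.2 hle) (not_le.2 ((sub_pos.2 hlt).trans_le hgapq))

lemma eq_of_right_eq [OrderTopology α] [CompactIccSpace α] [DenselyOrdered α]
    (hm : IsBackwardPlay f g a b m) (hm' : IsBackwardPlay f g a b m') (hb : m b = m' b) :
    ∀ t ∈ Icc a b, m t = m' t := fun t ht =>
  le_antisymm
    (hm'.le_of_right_le hm (fun _ _ => le_rfl) (fun _ _ => le_rfl) hb.le t ht)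
    (hm.le_of_right_le hm' (fun _ _ => le_rfl) (fun _ _ => le_rfl) hb.ge t ht)

lemma monotoneOn_of_lower_lt (hm : IsBackwardPlay f g a b m) (hs : a ≤ s) (ht : t ≤ b)
    (hlt : ∀ v ∈ Icc s t, f v < m v) : MonotoneOn m (Icc s t) := fun _ hx _ hy hxy =>
  hm.le_of_lower_lt (hs.trans hx.1) hxy (hy.2.trans ht) fun v hv =>
    hlt v ⟨hx.1.trans hv.1.le, hv.2.trans hy.2⟩

lemma antitoneOn_of_lt_upper (hm : IsBackwardPlay f g a b m) (hs : a ≤ s) (ht : t ≤ b)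
    (hlt : ∀ v ∈ Icc s t, m v < g v) : AntitoneOn m (Icc s t) := fun _ hx _ hy hxy =>
  hm.ge_of_lt_upper (hs.trans hx.1) hxy (hy.2.trans ht) fun v hv =>
    hlt v ⟨hx.1.trans hv.1.le, hv.2.trans hy.2⟩

lemma boundedVariationOn {f g m : ℝ → ℝ} {a b : ℝ} (hm : IsBackwardPlay f g a b m) (hab : a ≤ b)
    (hf : ContinuousOn f (Icc a b)) (hg : ContinuousOn g (Icc a b))
    (hfg : ∀ t ∈ Icc a b, f t < g t) : BoundedVariationOn m (Icc a b) := by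
  have hm_cont := hm.continuousOn.domRestrict
  let U : Bool → Set (Icc a b) := fun i =>
    cond i {x : Icc a b | f x < m x} {x : Icc a b | m x < g x}
  have hopen : ∀ i, IsOpen (U i) :=
    Bool.forall_bool.2 ⟨isOpen_lt hm_cont hg.domRestrict, isOpen_lt hf.domRestrict hm_cont⟩
  have hcover : univ ⊆ ⋃ i, U i := fun x _ => mem_iUnion.2 <|
    (lt_or_ge (f x) (m x)).elim (fun hlt => ⟨true, hlt⟩)
      fun hle => ⟨false, hle.trans_lt (hfg x x.2)⟩
  have hmem : ∀ {s t : Icc a b} {v : ℝ} (hv : v ∈ Icc (s : ℝ) t),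
      (⟨v, s.2.1.trans hv.1, hv.2.trans t.2.2⟩ : Icc a b) ∈ Icc s t := fun hv => hv
  refine boundedVariationOn_Icc_of_isOpen_cover hab hopen hcover
    (Bool.forall_bool.2 ⟨fun s t _ hU => ?_, fun s t _ hU => ?_⟩)
  · exact boundedVariationOn_Icc_of_antitoneOn <|
      hm.antitoneOn_of_lt_upper s.2.1 t.2.2 fun v hv => hU (hmem hv)
  · exact boundedVariationOn_Icc_of_monotoneOn <|
      hm.monotoneOn_of_lower_lt s.2.1 t.2.2 fun v hv => hU (hmem hv)

end IsBackwardPlay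

/-- The explicit max-min formula for the backward play in the tube between `f` and `g` which ends
at time `b` with the value `c`. -/
noncomputable def backwardPlay (f g : α → ℝ) (b : α) (c : ℝ) (t : α) : ℝ :=
  max (min c (sInf (g '' Icc t b)))
    (sSup ((fun s => min (f s) (sInf (g '' Icc t s))) '' Icc t b))

lemma sInf_image_Icc_eq_min (hst : s ≤ t) (htb : t ≤ b) (hg : BddBelow (g '' Icc s b)) :
    sInf (g '' Icc s b) = min (sInf (g '' Icc s t)) (sInf (g '' Icc t b)) := by
  rw [← Icc_union_Icc_eq_Icc hst htb, image_union] at hg ⊢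
  exact csInf_union (hg.mono subset_union_left) ((nonempty_Icc.2 hst).image g)
    (hg.mono subset_union_right) ((nonempty_Icc.2 htb).image g)

lemma sSup_image_min_const {ι : Type*} {φ : ι → ℝ} {A : Set ι} (hA : A.Nonempty)
    (hφ : BddAbove (φ '' A)) (c : ℝ) :
    sSup ((fun i => min (φ i) c) '' A) = min (sSup (φ '' A)) c := by
  have hmono : Monotone fun x : ℝ => min x c := fun _ _ h => min_le_min_right c h
  have hcont : Continuous fun x : ℝ => min x c := by fun_prop
  rw [hmono.map_csSup_of_continuousAt hcont.continuousAt (hA.image φ) hφ, image_image]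

lemma bddAbove_image_min {ι : Type*} {φ ψ : ι → ℝ} {A : Set ι} (hφ : BddAbove (φ '' A)) :
    BddAbove ((fun i => min (φ i) (ψ i)) '' A) :=
  hφ.imp fun _ hB => forall_mem_image.2 fun _ hi =>
    (min_le_left _ _).trans (hB (mem_image_of_mem φ hi))

lemma sSup_image_min_sInf_eq_max (hst : s ≤ t) (htb : t ≤ b) (hf : BddAbove (f '' Icc s b))
    (hg : BddBelow (g '' Icc s b)) :
    sSup ((fun w => min (f w) (sInf (g '' Icc s w))) '' Icc s b) =
      max (sSup ((fun w => min (f w) (sInf (g '' Icc s w))) '' Icc s t))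
        (min (sSup ((fun w => min (f w) (sInf (g '' Icc t w))) '' Icc t b))
          (sInf (g '' Icc s t))) := by
  have hft : BddAbove (f '' Icc t b) := hf.mono (image_mono (Icc_subset_Icc_left hst))
  have hsplit : ∀ w ∈ Icc t b, min (f w) (sInf (g '' Icc s w)) =
      min (min (f w) (sInf (g '' Icc t w))) (sInf (g '' Icc s t)) := by
    intro w hw
    rw [sInf_image_Icc_eq_min hst hw.1 (hg.mono (image_mono (Icc_subset_Icc_right hw.2))),
      min_comm (sInf (g '' Icc s t)), min_assoc]
  rw [← sSup_image_min_const (nonempty_Icc.2 htb) (bddAbove_image_min hft),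
    ← image_congr hsplit, ← Icc_union_Icc_eq_Icc hst htb, image_union]
  exact csSup_union
    (bddAbove_image_min (hf.mono (image_mono (Icc_subset_Icc_right htb))))
    ((nonempty_Icc.2 hst).image _) (bddAbove_image_min hft) ((nonempty_Icc.2 htb).image _)

lemma backwardPlay_right (hf : f b ≤ c) (hg : c ≤ g b) : backwardPlay f g b c b = c := by
  simp [backwardPlay, hf, hg]

lemma backwardPlay_restart (hst : s ≤ t) (htb : t ≤ b) (hf : BddAbove (f '' Icc s b))
    (hg : BddBelow (g '' Icc s b)) :
    backwardPlay f g b c s = backwardPlay f g t (backwardPlay f g b c t) s := by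
  rw [backwardPlay, backwardPlay, backwardPlay, sSup_image_min_sInf_eq_max hst htb hf hg,
    sInf_image_Icc_eq_min hst htb hg]
  simp only [min_max_distrib_right]
  ac_rfl

lemma backwardPlay_le_max (htb : t ≤ b) (hM : ∀ v ∈ Icc t b, f v ≤ M) :
    backwardPlay f g b c t ≤ max c M :=
  max_le_max (min_le_left _ _) <| csSup_le ((nonempty_Icc.2 htb).image _) <|
    forall_mem_image.2 fun v hv => (min_le_left _ _).trans (hM v hv)

lemma min_le_backwardPlay (htb : t ≤ b) (hM : ∀ v ∈ Icc t b, M ≤ g v) :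
    min c M ≤ backwardPlay f g b c t :=
  le_max_of_le_left <| min_le_min_left c <|
    le_csInf ((nonempty_Icc.2 htb).image g) (forall_mem_image.2 hM)

lemma lower_le_backwardPlay (htb : t ≤ b) (hf : BddAbove (f '' Icc t b)) (hfg : f t ≤ g t) :
    f t ≤ backwardPlay f g b c t := by
  refine le_max_of_le_right (le_csSup_of_le (bddAbove_image_min hf)
    (mem_image_of_mem _ (left_mem_Icc.2 htb)) ?_)
  simp only [Icc_self, image_singleton, csInf_singleton, le_min_iff, le_refl, hfg, and_self]

lemma backwardPlay_le_upper (htb : t ≤ b) (hg : BddBelow (g '' Icc t b)) :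
    backwardPlay f g b c t ≤ g t := by
  have hsInf : ∀ w ∈ Icc t b, sInf (g '' Icc t w) ≤ g t := fun w hw =>
    csInf_le (hg.mono (image_mono (Icc_subset_Icc_right hw.2)))
      (mem_image_of_mem g (left_mem_Icc.2 hw.1))
  exact max_le ((min_le_right _ _).trans (hsInf b (right_mem_Icc.2 htb))) <|
    csSup_le ((nonempty_Icc.2 htb).image _) <|
      forall_mem_image.2 fun w hw => (min_le_right _ _).trans (hsInf w hw)

lemma abs_backwardPlay_sub_le (hst : s ≤ t) (htb : t ≤ b) (hf : BddAbove (f '' Icc s b))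
    (hg : BddBelow (g '' Icc s b)) (hfg : f t ≤ g t) (hε : 0 ≤ ε)
    (hfε : ∀ v ∈ Icc s t, f v ≤ f t + ε) (hgε : ∀ v ∈ Icc s t, g t - ε ≤ g v) :
    |backwardPlay f g b c s - backwardPlay f g b c t| ≤ ε := by
  have hsub : Icc t b ⊆ Icc s b := Icc_subset_Icc_left hst
  have hft : f t ≤ backwardPlay f g b c t :=
    lower_le_backwardPlay htb (hf.mono (image_mono hsub)) hfg
  have hgt : backwardPlay f g b c t ≤ g t := backwardPlay_le_upper htb (hg.mono (image_mono hsub))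
  rw [backwardPlay_restart hst htb hf hg, abs_sub_le_iff, sub_le_iff_le_add', sub_le_comm]
  constructor
  · exact (backwardPlay_le_max hst hfε).trans (max_le (by linarith) (by linarith))
  · exact (le_min (by linarith) (by linarith)).trans (min_le_backwardPlay hst hgε)

section Topology

variable [TopologicalSpace α] [OrderTopology α] [CompactIccSpace α]

lemma continuousOn_backwardPlay (hf : ContinuousOn f (Icc a b)) (hg : ContinuousOn g (Icc a b))
    (hfg : ∀ t ∈ Icc a b, f t ≤ g t) : ContinuousOn (backwardPlay f g b c) (Icc a b) := by
  intro x hx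
  refine Metric.tendsto_nhds.2 fun ε hε => ?_
  have hε2 := half_pos hε
  filter_upwards [self_mem_nhdsWithin, eventually_forall_mem_uIcc_dist_lt (hf x hx) hx hε2,
    eventually_forall_mem_uIcc_dist_lt (hg x hx) hx hε2] with y hy hfy hgy
  have hbound : ∀ s ∈ Icc a b, ∀ t ∈ Icc a b, s ≤ t → Icc s t ⊆ uIcc x y →
      |backwardPlay f g b c s - backwardPlay f g b c t| ≤ ε / 2 := by
    intro s hs t ht hst hsub
    have hsab : Icc s b ⊆ Icc a b := Icc_subset_Icc_left hs.1
    have ht' : t ∈ Icc s t := right_mem_Icc.2 hst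
    exact abs_backwardPlay_sub_le hst ht.2 (isCompact_Icc.bddAbove_image (hf.mono hsab))
      (isCompact_Icc.bddBelow_image (hg.mono hsab)) (hfg t ht) hε2.le
      (fun v hv => sub_le_iff_le_add'.1
        ((le_abs_self _).trans (hfy v (hsub hv) t (hsub ht')).le))
      (fun v hv => sub_le_comm.1
        ((le_abs_self _).trans (hgy t (hsub ht') v (hsub hv)).le))
  refine lt_of_le_of_lt ?_ (half_lt_self hε)
  obtain hyx | hxy := le_total y x
  · exact hbound y hy x hx hyx Icc_subset_uIcc'
  · exact (dist_comm _ _).trans_le (hbound x hx y hy hxy Icc_subset_uIcc)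

theorem isBackwardPlay_backwardPlay [DenselyOrdered α] (hf : ContinuousOn f (Icc a b))
    (hg : ContinuousOn g (Icc a b)) (hfg : ∀ t ∈ Icc a b, f t ≤ g t) :
    IsBackwardPlay f g a b (backwardPlay f g b c) := by
  have hbddf : ∀ {t}, a ≤ t → BddAbove (f '' Icc t b) := fun ht =>
    isCompact_Icc.bddAbove_image (hf.mono (Icc_subset_Icc_left ht))
  have hbddg : ∀ {t}, a ≤ t → BddBelow (g '' Icc t b) := fun ht =>
    isCompact_Icc.bddBelow_image (hg.mono (Icc_subset_Icc_left ht))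
  have hcont := continuousOn_backwardPlay (c := c) hf hg hfg
  have hrestart : ∀ {x t}, a ≤ x → x ≤ t → t ≤ b → backwardPlay f g b c x =
      backwardPlay f g t (backwardPlay f g b c t) x := fun hx hxt ht =>
    backwardPlay_restart hxt ht (hbddf hx) (hbddg hx)
  refine ⟨hcont, fun t ht => lower_le_backwardPlay ht.2 (hbddf ht.1) (hfg t ht),
    fun t ht => backwardPlay_le_upper ht.2 (hbddg ht.1), fun s t hs hst ht hlt => ?_,
    fun s t hs hst ht hlt => ?_⟩
  · have hsub : Icc s t ⊆ Icc a b := Icc_subset_Icc hs ht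
    refine left_le_right_of_forall_le_max hst (hf.mono hsub) (hcont.mono hsub) ?_ hlt
    intro x hx M hM
    exact (hrestart (hs.trans hx.1) hx.2 ht).trans_le (backwardPlay_le_max hx.2 hM)
  · have hsub : Icc s t ⊆ Icc a b := Icc_subset_Icc hs ht
    refine left_le_right_of_forall_le_max (β := ℝᵒᵈ) hst (hg.mono hsub) (hcont.mono hsub) ?_ hlt
    intro x hx M hM
    exact (min_le_backwardPlay hx.2 hM).trans_eq (hrestart (hs.trans hx.1) hx.2 ht).symm

end Topology

end Play

section Skorokhod

variable {T : ℝ} {x l u k : ℝ → ℝ}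

lemma minimalityIncr_iff_forall_Ioc {y : ℝ → ℝ} : MinimalityIncr T y l u k ↔
    (∀ ⦃s t⦄, 0 ≤ s → s ≤ t → t ≤ T → (∀ v ∈ Ioc s t, y v < u v) → k s ≤ k t) ∧
      ∀ ⦃s t⦄, 0 ≤ s → s ≤ t → t ≤ T → (∀ v ∈ Ioc s t, l v < y v) → k t ≤ k s := by
  refine ⟨fun h => ⟨fun s t hs hst ht hlt => ?_, fun s t hs hst ht hlt => ?_⟩,
    fun h s t hs hst ht => ⟨fun hlt => ?_, fun hlt => ?_⟩⟩
  · obtain rfl | hst := hst.eq_or_lt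
    · exact le_rfl
    · exact (h s t hs hst ht).1 fun v hsv hvt => hlt v ⟨hsv, hvt⟩
  · obtain rfl | hst := hst.eq_or_lt
    · exact le_rfl
    · exact (h s t hs hst ht).2 fun v hsv hvt => hlt v ⟨hsv, hvt⟩
  · exact h.1 hs hst.le ht fun v hv => hlt v hv.1 hv.2
  · exact h.2 hs hst.le ht fun v hv => hlt v hv.1 hv.2

theorem isBackwardPlay_sub_const_iff :
    IsBackwardPlay (fun t => x t - u t) (fun t => x t - l t) 0 T (fun t => k t - k T) ↔
      ContinuousOn k (Icc 0 T) ∧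
        (∀ t ∈ Icc 0 T, l t ≤ x t + k T - k t ∧ x t + k T - k t ≤ u t) ∧
        MinimalityIncr T (fun t => x t + k T - k t) l u k := by
  have hlower (t : ℝ) : x t - u t ≤ k t - k T ↔ x t + k T - k t ≤ u t := by
    constructor <;> intro <;> linarith
  have hupper (t : ℝ) : k t - k T ≤ x t - l t ↔ l t ≤ x t + k T - k t := by
    constructor <;> intro <;> linarith
  have hlower_lt (t : ℝ) : x t - u t < k t - k T ↔ x t + k T - k t < u t := by
    constructor <;> intro <;> linarith
  have hupper_lt (t : ℝ) : k t - k T < x t - l t ↔ l t < x t + k T - k t := by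
    constructor <;> intro <;> linarith
  have hcont : ContinuousOn (fun t => k t - k T) (Icc 0 T) ↔ ContinuousOn k (Icc 0 T) :=
    ⟨fun h => (h.add continuousOn_const).congr fun t _ => (sub_add_cancel (k t) (k T)).symm,
      fun h => h.sub continuousOn_const⟩
  rw [minimalityIncr_iff_forall_Ioc]
  constructor
  · rintro ⟨hk, hf, hg, hrise, hfall⟩
    refine ⟨hcont.1 hk, fun t ht => ⟨(hupper t).1 (hg t ht), (hlower t).1 (hf t ht)⟩,
      fun s t hs hst ht hlt => ?_, fun s t hs hst ht hlt => ?_⟩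
    · exact (sub_le_sub_iff_right _).1 (hrise hs hst ht fun v hv => (hlower_lt v).2 (hlt v hv))
    · exact (sub_le_sub_iff_right _).1 (hfall hs hst ht fun v hv => (hupper_lt v).2 (hlt v hv))
  · rintro ⟨hk, hbounds, hrise, hfall⟩
    refine ⟨hcont.2 hk, fun t ht => (hlower t).2 (hbounds t ht).2,
      fun t ht => (hupper t).2 (hbounds t ht).1,
      fun s t hs hst ht hlt => ?_, fun s t hs hst ht hlt => ?_⟩
    · exact sub_le_sub_right (hrise hs hst ht fun v hv => (hlower_lt v).1 (hlt v hv)) _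
    · exact sub_le_sub_right (hfall hs hst ht fun v hv => (hupper_lt v).1 (hlt v hv)) _

end Skorokhod

/-- deterministic backward Skorokhod problem with two continuous barriers:
existence, uniqueness, and the explicit formula for the reflecting term `k`
(with `y_t = a + ȳ_T − ȳ_t + k_T − k_t`). -/
theorem stmt15 (T : ℝ) (hT : 0 < T) (l u ybar : ℝ → ℝ)
    (hl : ContinuousOn l (Icc 0 T)) (hu : ContinuousOn u (Icc 0 T))
    (hgap : ∃ ε > 0, ∀ t ∈ Icc (0:ℝ) T, ε ≤ u t - l t)
    (hy : ContinuousOn ybar (Icc 0 T))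
    (a : ℝ) (haL : l T ≤ a) (haU : a ≤ u T) :
    ∃ k : ℝ → ℝ,
      (ContinuousOn k (Icc 0 T) ∧ BoundedVariationOn k (Icc 0 T) ∧ k 0 = 0 ∧
        (∀ t ∈ Icc (0:ℝ) T, l t ≤ a + ybar T - ybar t + k T - k t ∧
          a + ybar T - ybar t + k T - k t ≤ u t) ∧
        MinimalityIncr T (fun v => a + ybar T - ybar v + k T - k v) l u k) ∧
      (∀ k' : ℝ → ℝ,
        (ContinuousOn k' (Icc 0 T) ∧ BoundedVariationOn k' (Icc 0 T) ∧ k' 0 = 0 ∧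
          (∀ t ∈ Icc (0:ℝ) T, l t ≤ a + ybar T - ybar t + k' T - k' t ∧
            a + ybar T - ybar t + k' T - k' t ≤ u t) ∧
          MinimalityIncr T (fun v => a + ybar T - ybar v + k' T - k' v) l u k') →
        ∀ t ∈ Icc (0:ℝ) T, k' t = k t) ∧
      (∀ t ∈ Icc (0:ℝ) T,
        k T - k t = -(max
          (min (max (a - u T) 0)
            (sInf ((fun v => a + ybar T - ybar v - l v) '' Icc t T)))
          (sSup ((fun s => min (a + ybar T - ybar s - u s)
            (sInf ((fun v => a + ybar T - ybar v - l v) '' Icc t s))) '' Icc t T)))) := by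
  obtain ⟨ε, hε, hgap⟩ := hgap
  let x : ℝ → ℝ := fun t => a + ybar T - ybar t
  let f : ℝ → ℝ := fun t => x t - u t
  let g : ℝ → ℝ := fun t => x t - l t
  let m : ℝ → ℝ := backwardPlay f g T (max (a - u T) 0)
  have hx : ContinuousOn x (Icc 0 T) := continuousOn_const.sub hy
  have hfg : ∀ t ∈ Icc 0 T, f t < g t := fun t ht =>
    sub_lt_sub_left (sub_pos.1 (hε.trans_le (hgap t ht))) _
  have hm : IsBackwardPlay f g 0 T m :=
    isBackwardPlay_backwardPlay (hx.sub hu) (hx.sub hl) fun t ht => (hfg t ht).le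
  have hmT : m T = 0 :=
    (backwardPlay_right (by simp [f, x]) (max_le (by linarith) (by linarith))).trans
      (max_eq_right (sub_nonpos.2 haU))
  have hk : IsBackwardPlay f g 0 T (fun t => m t - m 0 - (m T - m 0)) := by
    simpa only [sub_sub_sub_cancel_right, hmT, sub_zero] using hm
  obtain ⟨hcont, hbounds, hmin⟩ := isBackwardPlay_sub_const_iff.1 hk
  have hbv : BoundedVariationOn (fun t => m t - m 0) (Icc 0 T) :=
    (boundedVariationOn_sub_const_iff _).2
      (hm.boundedVariationOn hT.le (hx.sub hu) (hx.sub hl) hfg)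
  refine ⟨fun t => m t - m 0, ⟨hcont, hbv, sub_self _, hbounds, hmin⟩, ?_, fun t _ =>
    (by rw [hmT]; ring : m T - m 0 - (m t - m 0) = -m t)⟩
  rintro k' ⟨hcont', -, hk0, hbounds', hmin'⟩ t ht
  have heq := (isBackwardPlay_sub_const_iff.2 ⟨hcont', hbounds', hmin'⟩).eq_of_right_eq hm
    ((sub_self _).trans hmT.symm)
  linarith [heq t ht, heq 0 (left_mem_Icc.2 hT.le)]
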